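/- Let u be a single positive integer. A word w lies in C(u) if and only if every column of the RSK insertion tableau P(w) contains an entry equal to u. -/

import Mathlib

namespace Plactic

/-- Insert `x` into a weakly increasing row, returning the new row and the bumped entry. -/
def rowInsert (x : ℕ) : List ℕ → List ℕ × Option ℕ
  | [] => ([x], none)
  | y :: ys =>
    if x < y then (x :: ys, some y)
    else
      let p := rowInsert x ys
      (y :: p.1, p.2)

/-- RSK insertion of `x` into a tableau given as a list of rows. -/
def tInsert (x : ℕ) : List (List ℕ) → List (List ℕ)
  | [] => [[x]]
  | r :: rs =>
    match rowInsert x r with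
    | (r', none) => r' :: rs
    | (r', some y) => r' :: tInsert y rs

/-- The RSK insertion tableau of a word. -/
def P (w : List ℕ) : List (List ℕ) := w.foldl (fun t x => tInsert x t) []

/-- The `i`-th row (0-indexed) of the insertion tableau of `w`. -/
def row (w : List ℕ) (i : ℕ) : List ℕ := (P w).getD i []

/-- The `j`-th column (0-indexed) of a tableau, read top to bottom. -/
def col (T : List (List ℕ)) (j : ℕ) : List ℕ := T.filterMap (fun r => r[j]?)

/-- An elementary Knuth transposition. -/
inductive KStep : List ℕ → List ℕ → Prop
  | k1 (x y : List ℕ) (a b c : ℕ) : a ≤ b → b < c →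
      KStep (x ++ [a, c, b] ++ y) (x ++ [c, a, b] ++ y)
  | k2 (x y : List ℕ) (a b c : ℕ) : a < b → b ≤ c →
      KStep (x ++ [b, a, c] ++ y) (x ++ [b, c, a] ++ y)

/-- Knuth equivalence: the equivalence relation generated by Knuth transpositions. -/
def KEquiv : List ℕ → List ℕ → Prop := Relation.EqvGen KStep

/-- The centralizer of `u` in the plactic monoid. -/
def Cent (u : List ℕ) : Set (List ℕ) := {w | KEquiv (u ++ w) (w ++ u)}

end Plactic

/-!
Every word `w` is Knuth equivalent to the row reading word and to the column reading word of
`P w`. A letter commutes with every column containing it: it moves right across the larger entries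
by the first Knuth relation and across the smaller ones by the second. So if every column of `P w`
contains `u`, then `u` commutes with the column reading word, hence with `w`.

Conversely, let `u` commute with `w`, and let `c` be the number of occurrences of `u` in `w`.
Knuth equivalence is preserved by restricting words to an interval of letters, and it preserves the
length of a longest weakly increasing subsequence. If `L` is this length for the restriction `v` of
`w` to the letters `≤ u`, then `v ++ [u]` yields `L + 1` and `u :: v` yields `max L (c + 1)`, so
`L = c`; the same holds for the letters `≥ u`. Take for `w` the row reading word of a tableau, which
ends with the first row. The first row has no letter `> u`, since its last letter would prolong
`u ^ c`, so it is a weakly increasing subsequence of `v`, and there are at most `c` columns. As the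
columns are strictly increasing, each of them contains `u` at most once, hence exactly once.
-/

namespace Plactic

/-! ### Longest weakly increasing subsequences -/

section LisLength

variable {α : Type*} [Preorder α]

/-- The maximal length of a weakly increasing subsequence of a word. -/
noncomputable def lisLength (w : List α) : ℕ :=
  sSup {k | ∃ s : List α, s.Sublist w ∧ s.Pairwise (· ≤ ·) ∧ s.length = k}

theorem length_le_lisLength {s w : List α} (hsub : s.Sublist w) (hs : s.Pairwise (· ≤ ·)) :
    s.length ≤ lisLength w := by
  refine le_csSup ⟨w.length, ?_⟩ ⟨s, hsub, hs, rfl⟩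
  rintro _ ⟨t, ht, -, rfl⟩
  exact ht.length_le

theorem lisLength_le {w : List α} {n : ℕ}
    (h : ∀ s : List α, s.Sublist w → s.Pairwise (· ≤ ·) → s.length ≤ n) : lisLength w ≤ n := by
  refine csSup_le' ?_
  rintro _ ⟨s, hsub, hs, rfl⟩
  exact h s hsub hs

theorem exists_sublist_length_eq_lisLength (w : List α) :
    ∃ s : List α, s.Sublist w ∧ s.Pairwise (· ≤ ·) ∧ s.length = lisLength w := by
  refine Nat.sSup_mem (s := {k | ∃ s : List α, s.Sublist w ∧ s.Pairwise (· ≤ ·) ∧ s.length = k})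
    ⟨0, [], by simp⟩ ⟨w.length, ?_⟩
  rintro _ ⟨s, hsub, -, rfl⟩
  exact hsub.length_le

theorem lisLength_mono {v w : List α} (h : v.Sublist w) : lisLength v ≤ lisLength w :=
  lisLength_le fun _ hsub hs => length_le_lisLength (hsub.trans h) hs

theorem lisLength_le_max_of_descent {b c : α} (h : b < c) (x y : List α) :
    lisLength (x ++ c :: b :: y) ≤ max (lisLength (x ++ c :: y)) (lisLength (x ++ b :: y)) := by
  refine lisLength_le fun s hsub hs => le_max_iff.2 ?_
  obtain ⟨s₁, s₂, rfl, h₁, h₂⟩ := List.sublist_append_iff.1 hsub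
  rcases List.sublist_cons_iff.1 h₂ with h₂ | ⟨t, rfl, ht⟩
  · exact .inr (length_le_lisLength (h₁.append h₂) hs)
  rcases List.sublist_cons_iff.1 ht with ht | ⟨t, rfl, -⟩
  · exact .inl (length_le_lisLength (h₁.append (ht.cons_cons c)) hs)
  · have hcb : c ≤ b := List.rel_of_pairwise_cons (List.pairwise_append.1 hs).2.1 (by simp)
    exact absurd hcb h.not_ge

theorem lisLength_le_max_of_replace_right {a b c : α} (hab : a ≤ b) (hbc : b ≤ c) (x y : List α) :
    lisLength (x ++ a :: c :: y) ≤
      max (lisLength (x ++ c :: y)) (lisLength (x ++ a :: b :: y)) := by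
  refine lisLength_le fun s hsub hs => le_max_iff.2 ?_
  obtain ⟨s₁, s₂, rfl, h₁, h₂⟩ := List.sublist_append_iff.1 hsub
  rcases List.sublist_cons_iff.1 h₂ with h₂ | ⟨t, rfl, ht⟩
  · exact .inl (length_le_lisLength (h₁.append h₂) hs)
  refine .inr ?_
  rcases List.sublist_cons_iff.1 ht with ht | ⟨t', rfl, ht'⟩
  · exact length_le_lisLength (h₁.append ((ht.cons b).cons_cons a)) hs
  · have hs' : (s₁ ++ a :: b :: t').Pairwise (· ≤ ·) := by
      simp only [List.pairwise_append, List.pairwise_cons, List.forall_mem_cons] at hs ⊢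
      grind
    simpa using length_le_lisLength (h₁.append ((ht'.cons_cons b).cons_cons a)) hs'

theorem lisLength_le_max_of_replace_left {a b c : α} (hab : a ≤ b) (hbc : b ≤ c) (x y : List α) :
    lisLength (x ++ a :: c :: y) ≤
      max (lisLength (x ++ a :: y)) (lisLength (x ++ b :: c :: y)) := by
  refine lisLength_le fun s hsub hs => le_max_iff.2 ?_
  obtain ⟨s₁, s₂, rfl, h₁, h₂⟩ := List.sublist_append_iff.1 hsub
  rcases List.sublist_cons_iff.1 h₂ with h₂ | ⟨t, rfl, ht⟩
  · exact .inr (length_le_lisLength (h₁.append (h₂.cons b)) hs)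
  rcases List.sublist_cons_iff.1 ht with ht | ⟨t', rfl, ht'⟩
  · exact .inl (length_le_lisLength (h₁.append (ht.cons_cons a)) hs)
  · have hs' : (s₁ ++ b :: c :: t').Pairwise (· ≤ ·) := by
      simp only [List.pairwise_append, List.pairwise_cons, List.forall_mem_cons] at hs ⊢
      grind
    refine .inr ?_
    simpa using length_le_lisLength (h₁.append ((ht'.cons_cons c).cons_cons b)) hs'

theorem lisLength_add_one_le_concat {w : List α} {u : α} (h : ∀ x ∈ w, x ≤ u) :
    lisLength w + 1 ≤ lisLength (w ++ [u]) := by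
  obtain ⟨s, hsub, hs, hlen⟩ := exists_sublist_length_eq_lisLength w
  have hsu : (s ++ [u]).Pairwise (· ≤ ·) := by
    simpa [List.pairwise_append, hs] using fun x hx => h x (hsub.subset hx)
  simpa [hlen] using length_le_lisLength (hsub.append (.refl [u])) hsu

theorem lisLength_add_one_le_cons {w : List α} {u : α} (h : ∀ x ∈ w, u ≤ x) :
    lisLength w + 1 ≤ lisLength (u :: w) := by
  obtain ⟨s, hsub, hs, hlen⟩ := exists_sublist_length_eq_lisLength w
  have hus : (u :: s).Pairwise (· ≤ ·) := hs.cons fun x hx => h x (hsub.subset hx)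
  simpa [hlen] using length_le_lisLength (hsub.cons_cons u) hus

end LisLength

theorem length_le_count_of_sublist {α : Type*} [DecidableEq α] {s w : List α} {u : α}
    (hsub : s.Sublist w) (hs : ∀ x ∈ s, u = x) : s.length ≤ w.count u :=
  (List.count_eq_length.2 hs).symm.le.trans (hsub.count_le u)

section Count

variable {α : Type*} [PartialOrder α] [DecidableEq α]

theorem lisLength_cons_le {w : List α} {u : α} (h : ∀ x ∈ w, x ≤ u) :
    lisLength (u :: w) ≤ max (lisLength w) (w.count u + 1) := by
  refine lisLength_le fun s hsub hs => le_max_iff.2 ?_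
  rcases List.sublist_cons_iff.1 hsub with hsub | ⟨t, rfl, ht⟩
  · exact .inl (length_le_lisLength hsub hs)
  · refine .inr (Nat.succ_le_succ (length_le_count_of_sublist ht fun x hx => ?_))
    exact le_antisymm (List.rel_of_pairwise_cons hs hx) (h x (ht.subset hx))

theorem lisLength_concat_le {w : List α} {u : α} (h : ∀ x ∈ w, u ≤ x) :
    lisLength (w ++ [u]) ≤ max (lisLength w) (w.count u + 1) := by
  refine lisLength_le fun s hsub hs => le_max_iff.2 ?_
  obtain ⟨s, t, rfl, hs₁, ht⟩ := List.sublist_append_iff.1 hsub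
  rcases List.sublist_singleton.1 ht with rfl | rfl
  · exact .inl (by simpa using length_le_lisLength hs₁ (by simpa using hs))
  · have hsu : s.length ≤ w.count u := length_le_count_of_sublist hs₁ fun x hx =>
      le_antisymm (h x (hs₁.subset hx)) ((List.pairwise_append.1 hs).2.2 x hx u (by simp))
    exact .inr (by simpa using hsu)

end Count

/-! ### Knuth equivalence -/

namespace KStep

theorem kEquiv {x y : List ℕ} (h : KStep x y) : KEquiv x y := .rel _ _ h

theorem perm {x y : List ℕ} (h : KStep x y) : x.Perm y := by
  cases h with
  | k1 x y a b c => exact ((List.Perm.swap c a [b]).append_left x).append_right y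
  | k2 x y a b c => exact (((List.Perm.swap c a []).cons b).append_left x).append_right y

theorem append {x y : List ℕ} (h : KStep x y) (l r : List ℕ) :
    KStep (l ++ x ++ r) (l ++ y ++ r) := by
  cases h with
  | k1 x y a b c hab hbc => simpa using k1 (l ++ x) (y ++ r) a b c hab hbc
  | k2 x y a b c hab hbc => simpa using k2 (l ++ x) (y ++ r) a b c hab hbc

theorem filter {S : Set ℕ} [DecidablePred (· ∈ S)] (hS : S.OrdConnected) {x y : List ℕ}
    (h : KStep x y) : KEquiv (x.filter (· ∈ S)) (y.filter (· ∈ S)) := by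
  cases h with
  | k1 x y a b c hab hbc =>
    by_cases hac : a ∈ S ∧ c ∈ S
    · have hb : b ∈ S := hS.out hac.1 hac.2 ⟨hab, hbc.le⟩
      simpa [hac, hb] using (k1 (x.filter (· ∈ S)) (y.filter (· ∈ S)) a b c hab hbc).kEquiv
    · have : [a, c, b].filter (· ∈ S) = [c, a, b].filter (· ∈ S) := by grind
      simp only [List.filter_append, this]
      exact .refl _
  | k2 x y a b c hab hbc =>
    by_cases hac : a ∈ S ∧ c ∈ S
    · have hb : b ∈ S := hS.out hac.1 hac.2 ⟨hab.le, hbc⟩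
      simpa [hac, hb] using (k2 (x.filter (· ∈ S)) (y.filter (· ∈ S)) a b c hab hbc).kEquiv
    · have : [b, a, c].filter (· ∈ S) = [b, c, a].filter (· ∈ S) := by grind
      simp only [List.filter_append, this]
      exact .refl _

theorem lisLength_eq {x y : List ℕ} (h : KStep x y) : lisLength x = lisLength y := by
  cases h with
  | k1 x y a b c hab hbc =>
    simp only [List.append_assoc, List.cons_append, List.nil_append]
    apply le_antisymm
    · calc lisLength (x ++ a :: c :: b :: y)
        _ ≤ max (lisLength (x ++ a :: c :: y)) (lisLength (x ++ a :: b :: y)) := by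
          simpa using lisLength_le_max_of_descent hbc (x ++ [a]) y
        _ ≤ max (lisLength (x ++ c :: y)) (lisLength (x ++ a :: b :: y)) :=
          max_le (lisLength_le_max_of_replace_right hab hbc.le x y) (le_max_right _ _)
        _ ≤ lisLength (x ++ c :: a :: b :: y) :=
          max_le (lisLength_mono (by simp)) (lisLength_mono (by simp))
    · calc lisLength (x ++ c :: a :: b :: y)
        _ ≤ max (lisLength (x ++ c :: b :: y)) (lisLength (x ++ a :: b :: y)) :=
          lisLength_le_max_of_descent (hab.trans_lt hbc) x (b :: y)
        _ ≤ lisLength (x ++ a :: c :: b :: y) :=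
          max_le (lisLength_mono (by simp)) (lisLength_mono (by simp))
  | k2 x y a b c hab hbc =>
    simp only [List.append_assoc, List.cons_append, List.nil_append]
    apply le_antisymm
    · calc lisLength (x ++ b :: a :: c :: y)
        _ ≤ max (lisLength (x ++ b :: c :: y)) (lisLength (x ++ a :: c :: y)) :=
          lisLength_le_max_of_descent hab x (c :: y)
        _ ≤ max (lisLength (x ++ b :: c :: y)) (lisLength (x ++ a :: y)) :=
          max_le (le_max_left _ _)
            ((lisLength_le_max_of_replace_left hab.le hbc x y).trans_eq (max_comm _ _))
        _ ≤ lisLength (x ++ b :: c :: a :: y) :=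
          max_le (lisLength_mono (by simp)) (lisLength_mono (by simp))
    · calc lisLength (x ++ b :: c :: a :: y)
        _ ≤ max (lisLength (x ++ b :: c :: y)) (lisLength (x ++ b :: a :: y)) := by
          simpa using lisLength_le_max_of_descent (hab.trans_le hbc) (x ++ [b]) y
        _ ≤ lisLength (x ++ b :: a :: c :: y) :=
          max_le (lisLength_mono (by simp)) (lisLength_mono (by simp))

end KStep

namespace KEquiv

theorem equivalence : Equivalence KEquiv := Relation.EqvGen.is_equivalence KStep

theorem refl (x : List ℕ) : KEquiv x x := equivalence.refl x

theorem symm {x y : List ℕ} (h : KEquiv x y) : KEquiv y x := equivalence.symm h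

theorem trans {x y z : List ℕ} (h : KEquiv x y) (h' : KEquiv y z) : KEquiv x z :=
  equivalence.trans h h'

instance : Trans KEquiv KEquiv KEquiv := ⟨trans⟩

theorem of_kStep {R : List ℕ → List ℕ → Prop} (hR : Equivalence R)
    (hstep : ∀ x y, KStep x y → R x y) {x y : List ℕ} (h : KEquiv x y) : R x y :=
  hR.eqvGen_iff.1 (Relation.EqvGen.mono hstep x y h)

theorem perm {x y : List ℕ} (h : KEquiv x y) : x.Perm y :=
  h.of_kStep (List.Perm.eqv ℕ) fun _ _ => KStep.perm

theorem append {x y : List ℕ} (h : KEquiv x y) (l r : List ℕ) :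
    KEquiv (l ++ x ++ r) (l ++ y ++ r) :=
  h.of_kStep (equivalence.comap (l ++ · ++ r)) fun _ _ hxy => (hxy.append l r).kEquiv

theorem append_left {x y : List ℕ} (h : KEquiv x y) (l : List ℕ) :
    KEquiv (l ++ x) (l ++ y) := by
  simpa using h.append l []

theorem append_right {x y : List ℕ} (h : KEquiv x y) (r : List ℕ) :
    KEquiv (x ++ r) (y ++ r) := by
  simpa using h.append [] r

theorem cons {x y : List ℕ} (h : KEquiv x y) (a : ℕ) : KEquiv (a :: x) (a :: y) :=
  h.append_left [a]

theorem filter {S : Set ℕ} [DecidablePred (· ∈ S)] (hS : S.OrdConnected) {x y : List ℕ}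
    (h : KEquiv x y) : KEquiv (x.filter (· ∈ S)) (y.filter (· ∈ S)) :=
  h.of_kStep (equivalence.comap (List.filter (· ∈ S))) fun _ _ => KStep.filter hS

theorem lisLength_eq {x y : List ℕ} (h : KEquiv x y) : lisLength x = lisLength y :=
  h.of_kStep (eq_equivalence.comap lisLength) fun _ _ => KStep.lisLength_eq

theorem swap_before {a b c : ℕ} (hab : a ≤ b) (hbc : b < c) (y : List ℕ) :
    KEquiv (a :: c :: b :: y) (c :: a :: b :: y) :=
  (KStep.k1 [] y a b c hab hbc).kEquiv

theorem swap_after {a b c : ℕ} (hab : a < b) (hbc : b ≤ c) (y : List ℕ) :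
    KEquiv (b :: a :: c :: y) (b :: c :: a :: y) :=
  (KStep.k2 [] y a b c hab hbc).kEquiv

theorem row_concat_of_lt {R : List ℕ} {a b : ℕ} (hR : (b :: R).Pairwise (· ≤ ·)) (hab : a < b) :
    KEquiv (b :: (R ++ [a])) (b :: a :: R) := by
  induction R generalizing b with
  | nil => exact refl _
  | cons r R ih =>
    have hbr : b ≤ r := List.rel_of_pairwise_cons hR (by simp)
    calc KEquiv (b :: r :: (R ++ [a])) (b :: r :: a :: R) :=
          (ih hR.of_cons (hab.trans_le hbr)).cons b
      KEquiv _ (b :: a :: r :: R) := (swap_after hab hbr R).symm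

theorem row_insert_of_lt {R : List ℕ} {x y : ℕ} (hR : (R ++ [x]).Pairwise (· ≤ ·))
    (hxy : x < y) : KEquiv (R ++ [y, x]) (y :: (R ++ [x])) := by
  induction R with
  | nil => exact refl _
  | cons z R ih =>
    refine ((ih hR.of_cons).cons z).trans ?_
    cases R with
    | nil => exact swap_before (List.rel_of_pairwise_cons hR (by simp)) hxy []
    | cons t R =>
      have hzt : z ≤ t := List.rel_of_pairwise_cons hR (by simp)
      have htx : t ≤ x := List.rel_of_pairwise_cons hR.of_cons (by simp)
      exact swap_before hzt (htx.trans_lt hxy) (R ++ [x])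

theorem row_append_column {C R : List ℕ} {b : ℕ} (hR : (b :: R).Pairwise (· ≤ ·))
    (hC : (b :: C).Pairwise (· > ·)) : KEquiv (b :: (R ++ C)) (b :: (C ++ R)) := by
  induction C generalizing b with
  | nil => simpa using refl _
  | cons c C ih =>
    have hcb : c < b := List.rel_of_pairwise_cons hC (by simp)
    have hcR : (c :: R).Pairwise (· ≤ ·) :=
      hR.of_cons.cons fun r hr => hcb.le.trans (List.rel_of_pairwise_cons hR hr)
    calc KEquiv (b :: (R ++ c :: C)) (b :: c :: (R ++ C)) := by
          simpa using (row_concat_of_lt hR hcb).append_right C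
      KEquiv _ (b :: c :: (C ++ R)) := (ih hcR hC.of_cons).cons b

theorem cons_column_concat {X : List ℕ} {u : ℕ} (hX : (X ++ [u]).Pairwise (· > ·)) :
    KEquiv (u :: (X ++ [u])) (X ++ [u, u]) := by
  induction X with
  | nil => exact refl _
  | cons x X ih =>
    refine trans ?_ ((ih hX.of_cons).cons x)
    cases X with
    | nil => exact swap_before le_rfl (List.rel_of_pairwise_cons hX (by simp)) []
    | cons t X =>
      have htx : t < x := List.rel_of_pairwise_cons hX (by simp)
      have hut : u < t := List.rel_of_pairwise_cons hX.of_cons (by simp)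
      exact swap_before hut.le htx (X ++ [u])

theorem cons_cons_column {Y : List ℕ} {b u : ℕ} (hY : (b :: Y).Pairwise (· > ·)) (hb : b ≤ u) :
    KEquiv (b :: u :: Y) (b :: (Y ++ [u])) := by
  induction Y generalizing b with
  | nil => exact refl _
  | cons y Y ih =>
    have hy : y < b := List.rel_of_pairwise_cons hY (by simp)
    calc KEquiv (b :: u :: y :: Y) (b :: y :: u :: Y) := (swap_after hy hb Y).symm
      KEquiv _ (b :: y :: (Y ++ [u])) := (ih hY.of_cons (hy.le.trans hb)).cons b

end KEquiv

/-! ### Centralizers -/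

theorem nil_mem_cent (u : List ℕ) : [] ∈ Cent u := by
  simpa [Cent] using KEquiv.refl u

theorem append_mem_cent {u v w : List ℕ} (hv : v ∈ Cent u) (hw : w ∈ Cent u) :
    v ++ w ∈ Cent u := by
  have hv' : KEquiv (u ++ (v ++ w)) (v ++ (u ++ w)) := by simpa using KEquiv.append_right hv w
  have hw' : KEquiv (v ++ (u ++ w)) (v ++ w ++ u) := by simpa using KEquiv.append_left hw v
  exact hv'.trans hw'

theorem flatMap_mem_cent {ι : Type*} {u : List ℕ} {l : List ι} {f : ι → List ℕ}
    (h : ∀ i ∈ l, f i ∈ Cent u) : l.flatMap f ∈ Cent u := by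
  induction l with
  | nil => exact nil_mem_cent u
  | cons i l ih =>
    rw [List.forall_mem_cons] at h
    exact append_mem_cent h.1 (ih h.2)

theorem KEquiv.mem_cent {u v w : List ℕ} (h : KEquiv v w) (hv : v ∈ Cent u) : w ∈ Cent u :=
  ((h.append_left u).symm.trans hv).trans (h.append_right u)

theorem filter_mem_cent {S : Set ℕ} [DecidablePred (· ∈ S)] (hS : S.OrdConnected) {u w : List ℕ}
    (h : w ∈ Cent u) : w.filter (· ∈ S) ∈ Cent (u.filter (· ∈ S)) := by
  simpa only [List.filter_append] using! KEquiv.filter hS h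

theorem column_mem_cent_singleton {C : List ℕ} {u : ℕ} (hC : C.Pairwise (· > ·)) (hu : u ∈ C) :
    C ∈ Cent [u] := by
  obtain ⟨X, Y, rfl⟩ := List.append_of_mem hu
  have hX : (X ++ [u]).Pairwise (· > ·) := hC.sublist (by simp)
  have hY : (u :: Y).Pairwise (· > ·) := hC.sublist (by simp)
  have above : KEquiv (u :: (X ++ u :: Y)) (X ++ u :: u :: Y) := by
    simpa using (KEquiv.cons_column_concat hX).append_right Y
  have below : KEquiv (X ++ u :: u :: Y) (X ++ u :: Y ++ [u]) := by
    simpa using (KEquiv.cons_cons_column hY le_rfl).append_left X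
  exact above.trans below

theorem lisLength_filter_Iic_le_count {u : ℕ} {w : List ℕ} (h : w ∈ Cent [u]) :
    lisLength (w.filter (· ∈ Set.Iic u)) ≤ w.count u := by
  have hcomm : KEquiv (u :: w.filter (· ∈ Set.Iic u)) (w.filter (· ∈ Set.Iic u) ++ [u]) := by
    simpa [Cent] using filter_mem_cent (S := Set.Iic u) Set.ordConnected_Iic h
  have hle : ∀ x ∈ w.filter (· ∈ Set.Iic u), x ≤ u := by simp
  have hcount : (w.filter (· ∈ Set.Iic u)).count u = w.count u := List.count_filter (by simp)
  have hcons := lisLength_cons_le hle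
  have hconcat := lisLength_add_one_le_concat hle
  have := hcomm.lisLength_eq
  omega

theorem lisLength_filter_Ici_le_count {u : ℕ} {w : List ℕ} (h : w ∈ Cent [u]) :
    lisLength (w.filter (· ∈ Set.Ici u)) ≤ w.count u := by
  have hcomm : KEquiv (u :: w.filter (· ∈ Set.Ici u)) (w.filter (· ∈ Set.Ici u) ++ [u]) := by
    simpa [Cent] using filter_mem_cent (S := Set.Ici u) Set.ordConnected_Ici h
  have hle : ∀ x ∈ w.filter (· ∈ Set.Ici u), u ≤ x := by simp
  have hcount : (w.filter (· ∈ Set.Ici u)).count u = w.count u := List.count_filter (by simp)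
  have hcons := lisLength_add_one_le_cons hle
  have hconcat := lisLength_concat_le hle
  have := hcomm.lisLength_eq
  omega

theorem le_of_concat_mem_cent {u z : ℕ} {w : List ℕ} (h : w ++ [z] ∈ Cent [u]) : z ≤ u := by
  by_contra! huz
  have hsub : (List.replicate (w.count u) u ++ [z]).Sublist
      ((w ++ [z]).filter (· ∈ Set.Ici u)) := by
    have hw : (List.replicate (w.count u) u).Sublist (w.filter (· ∈ Set.Ici u)) := by
      rw [List.replicate_sublist_iff, List.count_filter (by simp)]
    simpa [huz.le] using hw.append_right [z]
  have hinc : (List.replicate (w.count u) u ++ [z]).Pairwise (· ≤ ·) := by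
    simpa [List.pairwise_append, List.pairwise_replicate] using fun _ => huz.le
  have hlen := (length_le_lisLength hsub hinc).trans (lisLength_filter_Ici_le_count h)
  simp [List.count_append, huz.ne'] at hlen

/-! ### Tableaux -/

/-- `Dominates r s`: the row `s` fits directly below the row `r` in a tableau, i.e. it is not
longer than `r` and each of its entries is larger than the entry of `r` above it. -/
def Dominates (r s : List ℕ) : Prop :=
  ∀ (j y : ℕ), s[j]? = some y → ∃ x, r[j]? = some x ∧ x < y

namespace Dominates

theorem nil_right (r : List ℕ) : Dominates r [] := by
  simp [Dominates]

theorem cons_cons_iff {x y : ℕ} {r s : List ℕ} :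
    Dominates (x :: r) (y :: s) ↔ x < y ∧ Dominates r s := by
  refine ⟨fun h => ⟨by simpa using h 0 y, fun j z hz => by simpa using h (j + 1) z hz⟩, ?_⟩
  rintro ⟨hxy, h⟩ (_ | j) z hz
  · simpa [← show y = z by simpa using hz] using hxy
  · simpa using h j z hz

theorem eq_nil_of_nil_left {s : List ℕ} (h : Dominates [] s) : s = [] := by
  cases s with
  | nil => rfl
  | cons y s => simpa using h 0 y

theorem trans {r s t : List ℕ} (h : Dominates r s) (h' : Dominates s t) : Dominates r t := by
  intro j z hz
  obtain ⟨y, hy, hyz⟩ := h' j z hz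
  obtain ⟨x, hx, hxy⟩ := h j y hy
  exact ⟨x, hx, hxy.trans hyz⟩

instance : Trans Dominates Dominates Dominates := ⟨trans⟩

theorem tail {r s : List ℕ} (h : Dominates r s) : Dominates r.tail s.tail := by
  intro j y hy
  simpa using h (j + 1) y (by simpa using hy)

theorem append_left {r s : List ℕ} (h : Dominates r s) (l : List ℕ) : Dominates (r ++ l) s := by
  intro j y hy
  obtain ⟨x, hx, hxy⟩ := h j y hy
  exact ⟨x, List.getElem?_append_left (List.getElem?_eq_some_iff.1 hx).1 ▸ hx, hxy⟩

theorem replace_left {a b s : List ℕ} {x y : ℕ} (h : Dominates (a ++ y :: b) s) (hxy : x ≤ y) :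
    Dominates (a ++ x :: b) s := by
  induction a generalizing s with
  | nil =>
    cases s with
    | nil => exact nil_right _
    | cons t s =>
      obtain ⟨hyt, hb⟩ := cons_cons_iff.1 h
      exact cons_cons_iff.2 ⟨hxy.trans_lt hyt, hb⟩
  | cons z a ih =>
    cases s with
    | nil => exact nil_right _
    | cons t s =>
      obtain ⟨hzt, has⟩ := cons_cons_iff.1 h
      exact cons_cons_iff.2 ⟨hzt, ih has⟩

theorem rowInsert_right {a b s : List ℕ} {x y : ℕ} (h : Dominates (a ++ y :: b) s)
    (ha : ∀ z ∈ a, z ≤ x) (hxy : x < y) : Dominates (a ++ x :: b) (rowInsert y s).1 := by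
  induction a generalizing s with
  | nil =>
    cases s with
    | nil => exact cons_cons_iff.2 ⟨hxy, nil_right b⟩
    | cons t s =>
      obtain ⟨hyt, hb⟩ := cons_cons_iff.1 h
      simpa [rowInsert, hyt] using cons_cons_iff.2 ⟨hxy, hb⟩
  | cons z a ih =>
    obtain ⟨hzx, ha⟩ := List.forall_mem_cons.1 ha
    have hzy : z < y := hzx.trans_lt hxy
    cases s with
    | nil => exact cons_cons_iff.2 ⟨hzy, nil_right _⟩
    | cons t s =>
      obtain ⟨hzt, has⟩ := cons_cons_iff.1 h
      by_cases hyt : y < t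
      · simpa [rowInsert, hyt] using cons_cons_iff.2 ⟨hzy, replace_left has hxy.le⟩
      · simpa [rowInsert, hyt] using cons_cons_iff.2 ⟨hzt, ih has ha⟩

end Dominates

/-- Semistandard tableaux as lists of rows from top to bottom. Empty rows at the bottom are
allowed, so that deleting the first column of a tableau leaves a tableau. -/
structure IsTableau (T : List (List ℕ)) : Prop where
  pairwise_row : ∀ r ∈ T, r.Pairwise (· ≤ ·)
  pairwise_dominates : T.Pairwise Dominates

/-- The number of columns of a tableau. -/
def width (T : List (List ℕ)) : ℕ := (T.getD 0 []).length

/-- The row reading word of a tableau, which reads the rows from bottom to top. -/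
def rowWord (T : List (List ℕ)) : List ℕ := T.reverse.flatten

/-- The column reading word of a tableau, which reads the columns from left to right and each of
them from bottom to top. -/
def colWord (T : List (List ℕ)) : List ℕ :=
  (List.range (width T)).flatMap fun j => (col T j).reverse

theorem rowWord_cons (r : List ℕ) (T : List (List ℕ)) : rowWord (r :: T) = rowWord T ++ r := by
  simp [rowWord]

theorem rowWord_concat (T : List (List ℕ)) (r : List ℕ) :
    rowWord (T ++ [r]) = r ++ rowWord T := by
  simp [rowWord]

theorem width_map_tail (T : List (List ℕ)) : width (T.map List.tail) = width T - 1 := by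
  cases T <;> simp [width]

theorem col_map_tail (T : List (List ℕ)) (j : ℕ) : col (T.map List.tail) j = col T (j + 1) := by
  simp [col, List.filterMap_map]

theorem colWord_eq_append {T : List (List ℕ)} (h : 0 < width T) :
    colWord T = (col T 0).reverse ++ colWord (T.map List.tail) := by
  obtain ⟨n, hn⟩ := Nat.exists_eq_add_of_lt h
  simp only [colWord, width_map_tail, col_map_tail, hn]
  simp [List.range_succ_eq_map, List.flatMap_map]

theorem isTableau_cons_iff {r : List ℕ} {T : List (List ℕ)} :
    IsTableau (r :: T) ↔
      r.Pairwise (· ≤ ·) ∧ (∀ s ∈ T.head?, Dominates r s) ∧ IsTableau T := by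
  constructor
  · rintro ⟨hrow, hdom⟩
    rw [List.forall_mem_cons] at hrow
    exact ⟨hrow.1, (List.isChain_cons.1 hdom.isChain).1, hrow.2, hdom.of_cons⟩
  · rintro ⟨hr, hhead, hT⟩
    refine ⟨List.forall_mem_cons.2 ⟨hr, hT.pairwise_row⟩, ?_⟩
    exact (List.isChain_cons.2 ⟨hhead, hT.pairwise_dominates.isChain⟩).pairwise

namespace IsTableau

theorem sublist {T U : List (List ℕ)} (hT : IsTableau T) (h : U.Sublist T) : IsTableau U :=
  ⟨fun r hr => hT.pairwise_row r (h.subset hr), hT.pairwise_dominates.sublist h⟩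

theorem map_tail {T : List (List ℕ)} (hT : IsTableau T) : IsTableau (T.map List.tail) where
  pairwise_row := List.forall_mem_map.2 fun r hr => (hT.pairwise_row r hr).tail
  pairwise_dominates := List.pairwise_map.2 (hT.pairwise_dominates.imp Dominates.tail)

theorem pairwise_col {T : List (List ℕ)} (hT : IsTableau T) (j : ℕ) :
    (col T j).Pairwise (· < ·) := by
  rw [col, List.pairwise_filterMap]
  refine hT.pairwise_dominates.imp fun {r s} h x hx y hy => ?_
  obtain ⟨z, hz, hzy⟩ := h j y hy
  rwa [← Option.some.inj (hz.symm.trans hx)]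

theorem rowWord_eq_nil {T : List (List ℕ)} (hT : IsTableau T) (h : width T = 0) :
    rowWord T = [] := by
  cases T with
  | nil => rfl
  | cons r T =>
    obtain rfl : r = [] := List.length_eq_zero_iff.1 h
    have hnil : ∀ s ∈ T, s = [] := fun s hs =>
      (List.rel_of_pairwise_cons hT.pairwise_dominates hs).eq_nil_of_nil_left
    simpa [rowWord] using hnil

theorem rowWord_kEquiv_col_append {T : List (List ℕ)} (hT : IsTableau T) :
    KEquiv (rowWord T) ((col T 0).reverse ++ rowWord (T.map List.tail)) := by
  induction T using List.reverseRecOn with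
  | nil => exact KEquiv.refl _
  | append_singleton T r ih =>
    have split_above := (ih (hT.sublist (List.sublist_append_left T [r]))).append_left r
    rw [rowWord_concat, List.map_append, List.map_singleton, rowWord_concat]
    refine split_above.trans ?_
    cases r with
    | nil => simpa [col] using KEquiv.refl _
    | cons b R =>
      have hR : (b :: R).Pairwise (· ≤ ·) := hT.pairwise_row _ (by simp)
      have hcol : (b :: (col T 0).reverse).Pairwise (· > ·) := by
        simpa [col, ← List.pairwise_reverse] using List.pairwise_reverse.2 (hT.pairwise_col 0)
      simpa [col] using
        (KEquiv.row_append_column hR hcol).append_right (rowWord (T.map List.tail))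

theorem rowWord_kEquiv_colWord {T : List (List ℕ)} (hT : IsTableau T) :
    KEquiv (rowWord T) (colWord T) := by
  induction hn : width T generalizing T with
  | zero => simpa [hT.rowWord_eq_nil hn, colWord, hn] using KEquiv.refl []
  | succ n ih =>
    have hwidth : width (T.map List.tail) = n := by simp [width_map_tail, hn]
    rw [colWord_eq_append (by omega)]
    exact hT.rowWord_kEquiv_col_append.trans ((ih hT.map_tail hwidth).append_left _)

theorem colWord_mem_cent {T : List (List ℕ)} (hT : IsTableau T) {u : ℕ}
    (hu : ∀ j < width T, u ∈ col T j) : colWord T ∈ Cent [u] :=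
  flatMap_mem_cent fun j hj => column_mem_cent_singleton
    (List.pairwise_reverse.2 (hT.pairwise_col j)) (by simpa using hu j (List.mem_range.1 hj))

end IsTableau

theorem count_flatMap_of_nodup {ι α : Type*} [DecidableEq α] {l : List ι} {f : ι → List α}
    (h : ∀ i ∈ l, (f i).Nodup) (a : α) : (l.flatMap f).count a = l.countP (a ∈ f ·) := by
  induction l with
  | nil => rfl
  | cons i l ih =>
    rw [List.forall_mem_cons] at h
    rw [List.flatMap_cons, List.count_append, ih h.2, h.1.count, List.countP_cons, add_comm]
    simp

namespace IsTableau

theorem count_rowWord {T : List (List ℕ)} (hT : IsTableau T) (u : ℕ) :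
    (rowWord T).count u = (List.range (width T)).countP (u ∈ col T ·) := by
  rw [hT.rowWord_kEquiv_colWord.perm.count_eq, colWord, count_flatMap_of_nodup]
  · simp
  · exact fun j _ => List.nodup_reverse.2 ((hT.pairwise_col j).imp ne_of_lt)

theorem forall_mem_col {T : List (List ℕ)} (hT : IsTableau T) {u : ℕ}
    (h : width T ≤ (rowWord T).count u) : ∀ j < width T, u ∈ col T j := by
  have hcount : (List.range (width T)).countP (u ∈ col T ·) = (List.range (width T)).length :=
    List.countP_le_length.antisymm (by simpa [← hT.count_rowWord u] using h)
  simpa using List.countP_eq_length.1 hcount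

theorem width_le_count {T : List (List ℕ)} (hT : IsTableau T) {u : ℕ}
    (h : rowWord T ∈ Cent [u]) : width T ≤ (rowWord T).count u := by
  rcases T with _ | ⟨r, T⟩
  · exact Nat.zero_le _
  rw [rowWord_cons] at h ⊢
  have hr : r.Pairwise (· ≤ ·) := hT.pairwise_row r (by simp)
  have hru : ∀ x ∈ r, x ≤ u := by
    rcases r.eq_nil_or_concat' with rfl | ⟨r, z, rfl⟩
    · simp
    have hzu : z ≤ u := le_of_concat_mem_cent (w := rowWord T ++ r) (by simpa using h)
    have hrz : ∀ x ∈ r, x ≤ z := by simpa using (List.pairwise_append.1 hr).2.2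
    simpa [or_imp, forall_and, hzu] using fun x hx => (hrz x hx).trans hzu
  have hsub : r.Sublist ((rowWord T ++ r).filter (· ∈ Set.Iic u)) :=
    List.sublist_filter_iff.2 ⟨r, by simp, (List.filter_eq_self.2 (by simpa using hru)).symm⟩
  exact (length_le_lisLength hsub hr).trans (lisLength_filter_Iic_le_count h)

end IsTableau

/-! ### Row insertion -/

theorem rowInsert_cases (x : ℕ) (r : List ℕ) :
    ((∀ z ∈ r, z ≤ x) ∧ rowInsert x r = (r ++ [x], none)) ∨
      ∃ a y b, r = a ++ y :: b ∧ (∀ z ∈ a, z ≤ x) ∧ x < y ∧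
        rowInsert x r = (a ++ x :: b, some y) := by
  induction r with
  | nil => simp [rowInsert]
  | cons z r ih =>
    by_cases hxz : x < z
    · exact .inr ⟨[], z, r, by simp [rowInsert, hxz]⟩
    · rcases ih with ⟨hr, hins⟩ | ⟨a, y, b, rfl, ha, hxy, hins⟩
      · exact .inl (by simpa [rowInsert, hxz, hins] using ⟨not_lt.1 hxz, hr⟩)
      · exact .inr ⟨z :: a, y, b, by simpa [rowInsert, hxz, hins] using ⟨⟨not_lt.1 hxz, ha⟩, hxy⟩⟩

theorem head?_tInsert (x : ℕ) (T : List (List ℕ)) :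
    (tInsert x T).head? = some (rowInsert x (T.headD [])).1 := by
  rcases T with _ | ⟨r, T⟩
  · rfl
  · rcases rowInsert_cases x r with ⟨-, hins⟩ | ⟨a, y, b, -, -, -, hins⟩ <;> simp [tInsert, hins]

theorem pairwise_replace {α : Type*} [Preorder α] {a b : List α} {x y : α}
    (h : (a ++ y :: b).Pairwise (· ≤ ·)) (ha : ∀ z ∈ a, z ≤ x) (hxy : x ≤ y) :
    (a ++ x :: b).Pairwise (· ≤ ·) := by
  simp only [List.pairwise_append, List.pairwise_cons, List.forall_mem_cons] at h ⊢
  grind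

theorem KEquiv.row_bump {a b : List ℕ} {x y : ℕ} (h : (a ++ y :: b).Pairwise (· ≤ ·))
    (ha : ∀ z ∈ a, z ≤ x) (hxy : x < y) :
    KEquiv (a ++ y :: b ++ [x]) (y :: (a ++ x :: b)) := by
  have hax : (a ++ [x]).Pairwise (· ≤ ·) := (pairwise_replace h ha hxy.le).sublist (by simp)
  have hyb : (y :: b).Pairwise (· ≤ ·) := h.sublist (by simp)
  have across_b : KEquiv (a ++ y :: b ++ [x]) (a ++ y :: x :: b) := by
    simpa using (row_concat_of_lt hyb hxy).append_left a
  have across_a : KEquiv (a ++ y :: x :: b) (y :: (a ++ x :: b)) := by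
    simpa using (row_insert_of_lt hax hxy).append_right b
  exact across_b.trans across_a

namespace IsTableau

theorem tInsert {T : List (List ℕ)} (hT : IsTableau T) (x : ℕ) : IsTableau (tInsert x T) := by
  induction T generalizing x with
  | nil => simp [Plactic.tInsert, isTableau_cons_iff, hT]
  | cons r T ih =>
    obtain ⟨hr, hhead, hT'⟩ := isTableau_cons_iff.1 hT
    rcases rowInsert_cases x r with ⟨hrx, hins⟩ | ⟨a, y, b, rfl, ha, hxy, hins⟩
    · have hrx' : (r ++ [x]).Pairwise (· ≤ ·) := by simpa [List.pairwise_append, hr] using hrx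
      simpa [Plactic.tInsert, hins] using
        isTableau_cons_iff.2 ⟨hrx', fun s hs => (hhead s hs).append_left [x], hT'⟩
    · have hdom : Dominates (a ++ y :: b) (T.headD []) := by
        cases T with
        | nil => exact Dominates.nil_right _
        | cons s T => exact hhead s rfl
      have hdom' : ∀ s ∈ (Plactic.tInsert y T).head?, Dominates (a ++ x :: b) s := by
        simpa [head?_tInsert] using hdom.rowInsert_right ha hxy
      simpa [Plactic.tInsert, hins] using
        isTableau_cons_iff.2 ⟨pairwise_replace hr ha hxy.le, hdom', ih hT' y⟩

theorem rowWord_concat_kEquiv_rowWord_tInsert {T : List (List ℕ)} (hT : IsTableau T) (x : ℕ) :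
    KEquiv (rowWord T ++ [x]) (rowWord (Plactic.tInsert x T)) := by
  induction T generalizing x with
  | nil => exact KEquiv.refl _
  | cons r T ih =>
    obtain ⟨hr, -, hT'⟩ := isTableau_cons_iff.1 hT
    rcases rowInsert_cases x r with ⟨-, hins⟩ | ⟨a, y, b, rfl, ha, hxy, hins⟩
    · simpa [Plactic.tInsert, hins, rowWord_cons] using KEquiv.refl _
    · have bump :
          KEquiv (rowWord T ++ (a ++ y :: b) ++ [x]) (rowWord T ++ [y] ++ (a ++ x :: b)) := by
        simpa using (KEquiv.row_bump hr ha hxy).append_left (rowWord T)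
      simpa [Plactic.tInsert, hins, rowWord_cons] using
        bump.trans ((ih hT' y).append_right (a ++ x :: b))

end IsTableau

theorem P_concat (w : List ℕ) (x : ℕ) : P (w ++ [x]) = tInsert x (P w) := by
  simp [P]

theorem isTableau_P (w : List ℕ) : IsTableau (P w) := by
  induction w using List.reverseRecOn with
  | nil => exact ⟨by simp [P], .nil⟩
  | append_singleton w x ih => exact P_concat w x ▸ ih.tInsert x

theorem kEquiv_rowWord_P (w : List ℕ) : KEquiv w (rowWord (P w)) := by
  induction w using List.reverseRecOn with
  | nil => exact KEquiv.refl _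
  | append_singleton w x ih =>
    rw [P_concat]
    exact (ih.append_right [x]).trans
      ((isTableau_P w).rowWord_concat_kEquiv_rowWord_tInsert x)

end Plactic

open Plactic in
theorem stmt_4 (u : ℕ) (hu : 0 < u) (w : List ℕ) (hw : ∀ x ∈ w, 0 < x) :
    w ∈ Cent [u] ↔ ∀ j < (row w 0).length, u ∈ col (P w) j := by
  have hT : IsTableau (P w) := isTableau_P w
  have hrow : KEquiv w (rowWord (P w)) := kEquiv_rowWord_P w
  have hcol : KEquiv w (colWord (P w)) := hrow.trans hT.rowWord_kEquiv_colWord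
  constructor
  · intro h
    exact hT.forall_mem_col (hT.width_le_count (hrow.mem_cent h))
  · intro h
    exact hcol.symm.mem_cent (hT.colWord_mem_cent h)
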